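/- Let X ⊂ ℝ² be a compact convex polygonal region and let μ : X → ℝ be a continuous strictly positive density. Consider the Lloyd iteration x(k+1) = c(V(x(k))), where V(x) = (V_1(x), …, V_N(x)) is the Voronoi partition of X generated by x = (x_1, …, x_N) and c(V(x)) = (c_1(V_1(x)), …, c_N(V_N(x))) is the corresponding vector of centroids with respect to μ. Then every solution (x(k))_{k≥0} whose iterates consist of distinct points converges, as k → ∞, to the set C of centroidal Voronoi configurations, i.e. dist(x(k), C) → 0 where C = { x ∈ Xᴺ with distinct entries : x_i = c_i(V_i(x)) for all i = 1, …, N }. -/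

import Mathlib

open MeasureTheory Filter

/-- The plane `ℝ²`. -/
abbrev E2 : Type := EuclideanSpace ℝ (Fin 2)

open Topology

/-- Voronoi cell. -/
def lloydCell {N : ℕ} (D : Set E2) (z : Fin N → E2) (i : Fin N) : Set E2 :=
  {q ∈ D | ∀ j, ‖q - z i‖ ≤ ‖q - z j‖}

lemma lloydCell_closed {N : ℕ} {D : Set E2} (hD : IsCompact D) (z : Fin N → E2) (i : Fin N) :
    IsClosed (lloydCell D z i) := by
  have : lloydCell D z i = D ∩ ⋂ j, {q | ‖q - z i‖ ≤ ‖q - z j‖} := by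
    ext q; simp [lloydCell]
  rw [this]
  refine hD.isClosed.inter (isClosed_iInter fun j => ?_)
  exact isClosed_le (by fun_prop) (by fun_prop)

lemma lloyd_bisector_null {ν : Measure E2} (hac : ν ≪ volume) {a b : E2} (hab : a ≠ b) :
    ν {q | ‖q - a‖ = ‖q - b‖} = 0 := by
  apply hac
  have : {q : E2 | ‖q - a‖ = ‖q - b‖} = (AffineSubspace.perpBisector a b : Set E2) := by
    ext q
    simp [AffineSubspace.mem_perpBisector_iff_dist_eq, dist_eq_norm]
  rw [this]
  refine Measure.addHaar_affineSubspace _ _ ?_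
  rw [Ne, AffineSubspace.perpBisector_eq_top]
  exact hab

lemma lloyd_integrable {F : Type*} [NormedAddCommGroup F] [SecondCountableTopology F]
    {ν : Measure E2} [IsFiniteMeasure ν] {D : Set E2} (hDc : IsCompact D)
    (hD : ∀ᵐ q ∂ν, q ∈ D) {f : E2 → F} (hf : Continuous f) : Integrable f ν := by
  obtain ⟨B, hB⟩ := hDc.exists_bound_of_continuousOn hf.continuousOn
  refine Integrable.of_bound hf.aestronglyMeasurable B ?_
  filter_upwards [hD] with q hq using hB q hq

lemma lloyd_small {ν : Measure E2} [IsFiniteMeasure ν] {g : E2 → ℝ} (hg : Continuous g)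
    (hgi : Integrable g ν)
    (hg0 : ∀ q, 0 ≤ g q) (hnull : ν {q | g q = 0} = 0) (A : ℕ → Set E2)
    (hA : ∀ n, MeasurableSet (A n))
    (hlim : Tendsto (fun n => ∫ q in A n, g q ∂ν) atTop (𝓝 0)) :
    Tendsto (fun n => ν.real (A n)) atTop (𝓝 0) := by
  have h1 : Tendsto (fun n : ℕ => ν {q | g q ≤ 1 / ((n : ℝ) + 1)}) atTop (𝓝 0) := by
    rw [← hnull]
    have : {q | g q = 0} = ⋂ n : ℕ, {q | g q ≤ 1 / ((n : ℝ) + 1)} := by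
      ext q
      simp only [Set.mem_ofPred_eq, Set.mem_iInter]
      constructor
      · intro h n; rw [h]; positivity
      · intro h
        refine le_antisymm ?_ (hg0 q)
        exact ge_of_tendsto' tendsto_one_div_add_atTop_nhds_zero_nat h
    rw [this]
    refine tendsto_measure_iInter_atTop (fun n => ?_) ?_ ⟨0, measure_ne_top _ _⟩
    · exact (measurableSet_le hg.measurable measurable_const).nullMeasurableSet
    · intro m n hmn q hq
      have hq1 : g q ≤ 1 / ((n : ℝ) + 1) := hq
      exact hq1.trans (Nat.one_div_le_one_div hmn)
  have h2 : Tendsto (fun n : ℕ => ν.real {q | g q ≤ 1 / ((n : ℝ) + 1)}) atTop (𝓝 0) := by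
    have := (ENNReal.tendsto_toReal ENNReal.zero_ne_top).comp h1
    simpa [Measure.real, Function.comp_def] using this
  rw [Metric.tendsto_atTop]
  intro ε hε
  obtain ⟨m, hm⟩ := (h2.eventually (gt_mem_nhds (half_pos hε))).exists
  set t : ℝ := 1 / ((m : ℝ) + 1) with ht
  have htp : 0 < t := by positivity
  obtain ⟨n0, hn0⟩ := eventually_atTop.1
    (hlim.eventually (gt_mem_nhds (show (0:ℝ) < t * (ε / 2) by positivity)))
  refine ⟨n0, fun n hn => ?_⟩
  have h3 := hn0 n hn
  have h4 := mul_meas_ge_le_integral_of_nonneg (μ := ν.restrict (A n))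
    (ae_of_all _ hg0) hgi.restrict t
  have h5 : (ν.restrict (A n)).real {q | t ≤ g q} < ε / 2 := by
    by_contra hcon
    push Not at hcon
    have := mul_le_mul_of_nonneg_left hcon htp.le
    linarith
  rw [measureReal_restrict_apply (measurableSet_le measurable_const hg.measurable)] at h5
  have h6 : ν.real (A n) ≤ ν.real ({q | g q ≤ t} ∪ ({q | t ≤ g q} ∩ A n)) := by
    refine measureReal_mono (fun q hq => ?_)
    rcases le_total (g q) t with h | h
    · exact Or.inl h
    · exact Or.inr ⟨h, hq⟩
  have h7 := measureReal_union_le (μ := ν) {q | g q ≤ t} ({q | t ≤ g q} ∩ A n)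
  rw [Real.dist_eq, sub_zero, abs_of_nonneg measureReal_nonneg]
  linarith

/-- centroid identity -/
lemma lloyd_centroid {ν : Measure E2} [IsFiniteMeasure ν] (A : Set E2) :
    ν.real A • ((ν.real A)⁻¹ • ∫ q in A, q ∂ν) = ∫ q in A, q ∂ν := by
  by_cases h : ν.real A = 0
  · have : ν A = 0 := by simpa [Measure.real, ENNReal.toReal_eq_zero_iff] using h
    rw [h, zero_smul, Measure.restrict_eq_zero.2 this]; simp
  · rw [smul_smul, mul_inv_cancel₀ h, one_smul]

lemma lloyd_inner {ν : Measure E2} [IsFiniteMeasure ν] (hid : Integrable (fun q : E2 => q) ν)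
    (A : Set E2) (c : E2) (hc : c = (ν.real A)⁻¹ • ∫ q in A, q ∂ν) (p e : E2) :
    ∫ q in A, inner ℝ (q - p) e ∂ν = ν.real A * inner ℝ (c - p) e := by
  have h1 : ∫ q in A, inner ℝ e (q - p) ∂ν = inner ℝ e (∫ q in A, (q - p) ∂ν) :=
    integral_inner (hid.restrict.sub (integrable_const _)) e
  have h2 : ∫ q in A, (q - p) ∂ν = ν.real A • (c - p) := by
    rw [integral_sub hid.restrict (integrable_const _), setIntegral_const, smul_sub, hc,
      lloyd_centroid]
  simp_rw [real_inner_comm e] 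
  rw [h1, h2, inner_smul_right]

section
variable {N : ℕ} [NeZero N]

lemma lloyd_ne : (Finset.univ : Finset (Fin N)).Nonempty := ⟨0, Finset.mem_univ _⟩

/-- Quantization error density. -/
noncomputable def lloydF (z : Fin N → E2) (q : E2) : ℝ :=
  Finset.univ.inf' lloyd_ne (fun i => ‖q - z i‖ ^ 2)

lemma lloydF_cont (z : Fin N → E2) : Continuous (lloydF z) := by
  unfold lloydF
  exact Continuous.finset_inf'_apply _ (fun i _ => by fun_prop)

lemma lloydF_le (z : Fin N → E2) (q : E2) (i : Fin N) : lloydF z q ≤ ‖q - z i‖ ^ 2 :=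
  Finset.inf'_le _ (Finset.mem_univ i)

lemma lloydF_nonneg (z : Fin N → E2) (q : E2) : 0 ≤ lloydF z q :=
  Finset.le_inf' _ _ (fun i _ => by positivity)

lemma lloydF_eq {D : Set E2} {z : Fin N → E2} {q : E2} {i : Fin N} (h : q ∈ lloydCell D z i) :
    lloydF z q = ‖q - z i‖ ^ 2 := by
  refine le_antisymm (lloydF_le z q i) (Finset.le_inf' _ _ (fun j _ => ?_))
  have := h.2 j
  gcongr

lemma lloydCell_cover {D : Set E2} (z : Fin N → E2) {q : E2} (hq : q ∈ D) :
    ∃ i, q ∈ lloydCell D z i := by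
  obtain ⟨i, hi⟩ := Finite.exists_min (fun j => ‖q - z j‖)
  exact ⟨i, hq, hi⟩

lemma lloyd_sum {ν : Measure E2} [IsFiniteMeasure ν] (hac : ν ≪ volume)
    {D : Set E2} (hDc : IsCompact D) (hD : ∀ᵐ q ∂ν, q ∈ D) {z : Fin N → E2}
    (hz : Function.Injective z) {f : E2 → ℝ} (hf : Continuous f) :
    ∫ q, f q ∂ν = ∑ i, ∫ q in lloydCell D z i, f q ∂ν := by
  have hU : (⋃ i, lloydCell D z i) = D := by
    ext q
    simp only [Set.mem_iUnion]
    exact ⟨fun ⟨i, hi⟩ => hi.1, fun h => lloydCell_cover z h⟩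
  have h1 : ∫ q, f q ∂ν = ∫ q in ⋃ i, lloydCell D z i, f q ∂ν := by
    rw [hU, Measure.restrict_eq_self_of_ae_mem hD]
  rw [h1, integral_iUnion_ae (fun i => (lloydCell_closed hDc z i).measurableSet.nullMeasurableSet)
    ?_ (lloyd_integrable hDc hD hf).integrableOn, tsum_fintype]
  intro i j hij
  refine measure_mono_null ?_ (lloyd_bisector_null hac (hz.ne hij))
  intro q hq
  exact le_antisymm (hq.1.2 j) (hq.2.2 i)

lemma lloyd_descent {ν : Measure E2} [IsFiniteMeasure ν] (hac : ν ≪ volume)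
    {D : Set E2} (hDc : IsCompact D) (hD : ∀ᵐ q ∂ν, q ∈ D) {z c : Fin N → E2}
    (hz : Function.Injective z)
    (hc : ∀ i, c i = (ν.real (lloydCell D z i))⁻¹ • ∫ q in lloydCell D z i, q ∂ν) :
    ∑ i, ν.real (lloydCell D z i) * ‖z i - c i‖ ^ 2
      ≤ ∫ q, lloydF z q ∂ν - ∫ q, lloydF c q ∂ν := by
  have hid : Integrable (fun q : E2 => q) ν := lloyd_integrable hDc hD continuous_id
  rw [lloyd_sum hac hDc hD hz (lloydF_cont z), lloyd_sum hac hDc hD hz (lloydF_cont c),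
    ← Finset.sum_sub_distrib]
  refine Finset.sum_le_sum fun i _ => ?_
  have hm := (lloydCell_closed hDc z i).measurableSet
  have hint : ∀ {f : E2 → ℝ}, Continuous f → Integrable f (ν.restrict (lloydCell D z i)) :=
    fun hf => (lloyd_integrable hDc hD hf).restrict
  have h1 : ∫ q in lloydCell D z i, lloydF z q ∂ν = ∫ q in lloydCell D z i, ‖q - z i‖ ^ 2 ∂ν :=
    setIntegral_congr_fun hm (fun q hq => lloydF_eq hq)
  have h2 : ∫ q in lloydCell D z i, lloydF c q ∂ν ≤ ∫ q in lloydCell D z i, ‖q - c i‖ ^ 2 ∂ν :=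
    integral_mono (hint (lloydF_cont c)) (hint (by fun_prop)) (fun q => lloydF_le c q i)
  have h3 : ∫ q in lloydCell D z i, ‖q - z i‖ ^ 2 ∂ν
      = ∫ q in lloydCell D z i, ‖q - c i‖ ^ 2 ∂ν
        + ν.real (lloydCell D z i) * ‖z i - c i‖ ^ 2 := by
    have h4 : ∀ q : E2, ‖q - z i‖ ^ 2 = ‖q - c i‖ ^ 2 + (2 * inner ℝ (q - c i) (c i - z i)
        + ‖z i - c i‖ ^ 2) := by
      intro q
      have : q - z i = (q - c i) + (c i - z i) := by abel
      rw [this, norm_add_sq_real, norm_sub_rev (z i)]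
      ring
    simp_rw [h4]
    rw [integral_add (hint (by fun_prop)) (hint (by fun_prop)),
      integral_add (hint (by fun_prop)) (hint (by fun_prop)), integral_const_mul,
      lloyd_inner hid _ _ (hc i), setIntegral_const]
    simp
  rw [h1]; linarith

/-- Continuity of integrals over cells. -/
lemma lloyd_cont {F : Type*} [NormedAddCommGroup F] [NormedSpace ℝ F] [SecondCountableTopology F]
    {ν : Measure E2} [IsFiniteMeasure ν] (hac : ν ≪ volume)
    {D : Set E2} (hDc : IsCompact D) (hD : ∀ᵐ q ∂ν, q ∈ D) {z : Fin N → E2}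
    (hz : Function.Injective z) {y : ℕ → Fin N → E2} (hy : Tendsto y atTop (𝓝 z))
    {f : E2 → F} (hf : Continuous f) (i : Fin N) :
    Tendsto (fun n => ∫ q in lloydCell D (y n) i, f q ∂ν) atTop
      (𝓝 (∫ q in lloydCell D z i, f q ∂ν)) := by
  simp_rw [← integral_indicator (lloydCell_closed hDc _ i).measurableSet]
  have hfi := lloyd_integrable hDc hD hf
  refine tendsto_integral_of_dominated_convergence (fun q => ‖f q‖) (fun n => ?_) hfi.norm
    (fun n => ae_of_all _ fun q => norm_indicator_le_norm_self _ _) ?_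
  · exact hfi.aestronglyMeasurable.indicator (lloydCell_closed hDc _ i).measurableSet
  have hb : ∀ᵐ q ∂ν, ∀ j, j ≠ i → ‖q - z i‖ ≠ ‖q - z j‖ := by
    rw [ae_all_iff]; intro j
    by_cases hj : j = i
    · simp [hj]
    · have : ∀ᵐ q ∂ν, ¬ (‖q - z i‖ = ‖q - z j‖) := by
        rw [ae_iff]; simpa using lloyd_bisector_null hac (hz.ne (Ne.symm hj))
      filter_upwards [this] with q hq _ using hq
  have hn : ∀ (q : E2) j, Tendsto (fun n => ‖q - y n j‖) atTop (𝓝 ‖q - z j‖) := fun q j =>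
    (tendsto_const_nhds.sub ((tendsto_pi_nhds.1 hy) j)).norm
  filter_upwards [hD, hb] with q hqD hq
  refine tendsto_const_nhds.congr' ?_
  by_cases hmem : q ∈ lloydCell D z i
  · have : ∀ᶠ n in atTop, ∀ j, ‖q - y n i‖ ≤ ‖q - y n j‖ := by
      rw [eventually_all]; intro j
      by_cases hj : j = i
      · simp [hj]
      · exact ((hn q i).eventually_lt (hn q j)
          (lt_of_le_of_ne (hmem.2 j) (hq j hj))).mono fun n h => h.le
    filter_upwards [this] with n h
    rw [Set.indicator_of_mem hmem, Set.indicator_of_mem (show q ∈ lloydCell D (y n) i from ⟨hqD, h⟩)]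
  · have : ∃ j, ‖q - z j‖ < ‖q - z i‖ := by
      by_contra hcon
      push Not at hcon
      exact hmem ⟨hqD, hcon⟩
    obtain ⟨j, hj⟩ := this
    filter_upwards [(hn q j).eventually_lt (hn q i) hj] with n h
    rw [Set.indicator_of_notMem hmem, Set.indicator_of_notMem]
    exact fun h' => absurd (h'.2 j) (not_le.2 h)

/-- Cells of colliding generators lose all their mass. -/
lemma lloyd_collide {ν : Measure E2} [IsFiniteMeasure ν] (hac : ν ≪ volume)
    {D : Set E2} (hDc : IsCompact D) (hD : ∀ᵐ q ∂ν, q ∈ D) {z : Fin N → E2}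
    {y c : ℕ → Fin N → E2} (hy : Tendsto y atTop (𝓝 z))
    (hyi : ∀ n, Function.Injective (y n))
    (hc : ∀ n i, c n i = (ν.real (lloydCell D (y n) i))⁻¹ • ∫ q in lloydCell D (y n) i, q ∂ν)
    (hlim : ∀ i, Tendsto (fun n => ν.real (lloydCell D (y n) i) * ‖y n i - c n i‖ ^ 2) atTop (𝓝 0))
    {i j : Fin N} (hij : i ≠ j) (hzz : z i = z j) :
    Tendsto (fun n => ν.real (lloydCell D (y n) i)) atTop (𝓝 0) := by
  have hid : Integrable (fun q : E2 => q) ν := lloyd_integrable hDc hD continuous_id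
  refine tendsto_of_subseq_tendsto fun ns hns => ?_
  let e : ℕ → E2 := fun n => ‖y (ns n) i - y (ns n) j‖⁻¹ • (y (ns n) i - y (ns n) j)
  have hne : ∀ n, ‖y n i - y n j‖ ≠ 0 := fun n => by
    rw [norm_ne_zero_iff, sub_ne_zero]; exact (hyi n).ne hij
  have he1 : ∀ n, ‖e n‖ = 1 := fun n => by
    simp only [e, norm_smul, norm_inv, norm_norm]
    exact inv_mul_cancel₀ (hne _)
  obtain ⟨e0, he0, φ, hφ, hlime⟩ := (isCompact_sphere (0 : E2) 1).tendsto_subseq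
    (x := e) (fun n => by simp [he1])
  have he0n : ‖e0‖ = 1 := by simpa using he0
  refine ⟨φ, ?_⟩
  have hsub : Tendsto (fun n => ns (φ n)) atTop atTop := hns.comp hφ.tendsto_atTop
  set w := z i with hw
  let m : ℕ → E2 := fun n => (1 / 2 : ℝ) • (y (ns (φ n)) i + y (ns (φ n)) j)
  have hyl : ∀ l, Tendsto (fun n => y (ns (φ n)) l) atTop (𝓝 (z l)) := fun l =>
    ((tendsto_pi_nhds.1 hy) l).comp hsub
  have hml : Tendsto m atTop (𝓝 w) := by
    have := ((hyl i).add (hyl j)).const_smul (1 / 2 : ℝ)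
    rw [← hzz, ← two_smul ℝ (z i), smul_smul] at this
    simpa [m, hw] using this
  have hpos : ∀ n, ∀ q ∈ lloydCell D (y (ns (φ n))) i, 0 ≤ inner ℝ (q - m n) (e (φ n)) := by
    intro n q hq
    have h1 := hq.2 j
    have h2 : ‖q - y (ns (φ n)) i‖ ^ 2 ≤ ‖q - y (ns (φ n)) j‖ ^ 2 := by gcongr
    have h3 : ‖q - y (ns (φ n)) j‖ ^ 2 - ‖q - y (ns (φ n)) i‖ ^ 2
        = 2 * inner ℝ (q - m n) (y (ns (φ n)) i - y (ns (φ n)) j) := by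
      simp only [m]
      generalize y (ns (φ n)) i = a
      generalize y (ns (φ n)) j = b
      simp only [EuclideanSpace.norm_sq_eq, PiLp.inner_apply, Fin.sum_univ_two, PiLp.sub_apply,
        PiLp.add_apply, PiLp.smul_apply, Real.norm_eq_abs, sq_abs, smul_eq_mul,
        RCLike.inner_apply, conj_trivial]
      ring
    simp only [e, inner_smul_right]
    have : 0 ≤ inner ℝ (q - m n) (y (ns (φ n)) i - y (ns (φ n)) j) := by linarith
    positivity
  let g : E2 → ℝ := fun q => |inner ℝ (q - w) e0|
  have hgc : Continuous g := by fun_prop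
  have hnull : ν {q | g q = 0} = 0 := by
    have hne' : w + e0 ≠ w - e0 := by
      intro h
      have h' : (2 : ℝ) • e0 = 0 := by
        have := sub_eq_zero.2 h
        rw [two_smul, ← this]; abel
      have : e0 = 0 := by simpa using h'
      simp [this] at he0n
    refine measure_mono_null ?_ (lloyd_bisector_null hac hne')
    intro q hq
    have hq' : inner ℝ (q - w) e0 = 0 := by simpa [g] using hq
    have h1 : q - (w + e0) = (q - w) - e0 := by abel
    have h2 : q - (w - e0) = (q - w) + e0 := by abel
    show ‖_‖ = ‖_‖
    rw [h1, h2]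
    have h3 : ‖(q - w) - e0‖ ^ 2 = ‖(q - w) + e0‖ ^ 2 := by
      rw [norm_sub_sq_real, norm_add_sq_real, hq']; ring
    exact (sq_eq_sq₀ (norm_nonneg _) (norm_nonneg _)).1 h3
  refine lloyd_small hgc (lloyd_integrable hDc hD hgc) (fun q => abs_nonneg _) hnull _
    (fun n => (lloydCell_closed hDc _ i).measurableSet) ?_
  obtain ⟨R, hR⟩ := hDc.exists_bound_of_continuousOn (f := fun q => q - w) (by fun_prop)
  set M := ν.real Set.univ
  let mm : ℕ → ℝ := fun n => ν.real (lloydCell D (y (ns (φ n))) i)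
  have hmm0 : ∀ n, 0 ≤ mm n := fun n => measureReal_nonneg
  have hmmM : ∀ n, mm n ≤ M := fun n => measureReal_mono (Set.subset_univ _)
  let δ : ℕ → ℝ := fun n => ‖m n - w‖ + R * ‖e (φ n) - e0‖
  have hδ : Tendsto δ atTop (𝓝 0) := by
    have h1 := (tendsto_iff_norm_sub_tendsto_zero.1 hml)
    have h2 := (tendsto_iff_norm_sub_tendsto_zero.1 hlime).const_mul R
    simpa [δ] using h1.add h2
  -- the first moment
  have hmc : Tendsto (fun n => mm n * ‖y (ns (φ n)) i - c (ns (φ n)) i‖) atTop (𝓝 0) := by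
    have h1 := ((hlim i).comp hsub).const_mul M
    rw [mul_zero] at h1
    have h2 : Tendsto (fun n => (mm n * ‖y (ns (φ n)) i - c (ns (φ n)) i‖) ^ 2) atTop (𝓝 0) := by
      refine squeeze_zero (fun n => by positivity) (fun n => ?_) h1
      have : (mm n * ‖y (ns (φ n)) i - c (ns (φ n)) i‖) ^ 2
        = mm n * (mm n * ‖y (ns (φ n)) i - c (ns (φ n)) i‖ ^ 2) := by ring
      rw [this]
      exact mul_le_mul_of_nonneg_right (hmmM n) (mul_nonneg (hmm0 n) (by positivity))
    have h3 := h2.sqrt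
    rw [Real.sqrt_zero] at h3
    refine h3.congr fun n => ?_
    exact Real.sqrt_sq (mul_nonneg (hmm0 n) (norm_nonneg _))
  have hym : Tendsto (fun n => M * ‖y (ns (φ n)) i - m n‖) atTop (𝓝 0) := by
    have := ((hyl i).sub hml).norm.const_mul M
    simpa [← hw] using this
  have htot := (hmc.add hym).add (hδ.const_mul M)
  simp only [add_zero, mul_zero] at htot
  refine squeeze_zero (fun n => integral_nonneg fun q => abs_nonneg _) (fun n => ?_) htot
  have hcm := (lloydCell_closed hDc (y (ns (φ n))) i).measurableSet
  have hδ0 : 0 ≤ δ n ∨ mm n = 0 := by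
    by_cases hD' : D.Nonempty
    · obtain ⟨q, hq⟩ := hD'
      have : 0 ≤ R := (norm_nonneg _).trans (hR q hq)
      left; positivity
    · right
      rw [Set.not_nonempty_iff_eq_empty] at hD'
      simp [mm, lloydCell, hD']
  have hA : ∫ q in lloydCell D (y (ns (φ n))) i, g q ∂ν
      ≤ ∫ q in lloydCell D (y (ns (φ n))) i, (inner ℝ (q - m n) (e (φ n)) + δ n) ∂ν := by
    refine setIntegral_mono_on (lloyd_integrable hDc hD hgc).integrableOn
      (lloyd_integrable hDc hD (by fun_prop)).integrableOn hcm fun q hq => ?_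
    have h1 := hpos n q hq
    have h2 : inner ℝ (q - w) e0 = inner ℝ (q - m n) (e (φ n)) + inner ℝ (m n - w) (e (φ n))
        - inner ℝ (q - w) (e (φ n) - e0) := by
      rw [← inner_add_left, inner_sub_right]
      simp
    have h3 := abs_real_inner_le_norm (m n - w) (e (φ n))
    have h4 := abs_real_inner_le_norm (q - w) (e (φ n) - e0)
    have h5 : ‖q - w‖ * ‖e (φ n) - e0‖ ≤ R * ‖e (φ n) - e0‖ :=
      mul_le_mul_of_nonneg_right (hR q hq.1) (norm_nonneg _)
    rw [he1, mul_one] at h3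
    simp only [g, δ]
    rw [h2, abs_le]
    rw [abs_le] at h3 h4
    constructor <;> linarith
  have hB : ∫ q in lloydCell D (y (ns (φ n))) i, (inner ℝ (q - m n) (e (φ n)) + δ n) ∂ν
      = mm n * inner ℝ (c (ns (φ n)) i - m n) (e (φ n)) + mm n * δ n := by
    rw [integral_add (lloyd_integrable hDc hD (by fun_prop)).restrict (integrable_const _),
      lloyd_inner hid _ _ (hc _ i), setIntegral_const, smul_eq_mul]
  have hC : inner ℝ (c (ns (φ n)) i - m n) (e (φ n))
      ≤ ‖y (ns (φ n)) i - c (ns (φ n)) i‖ + ‖y (ns (φ n)) i - m n‖ := by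
    refine (real_inner_le_norm _ _).trans ?_
    rw [he1, mul_one, norm_sub_rev (y (ns (φ n)) i) (c (ns (φ n)) i)]
    exact norm_sub_le_norm_sub_add_norm_sub _ _ _
  have hC' := mul_le_mul_of_nonneg_left hC (hmm0 n)
  have hE : mm n * ‖y (ns (φ n)) i - m n‖ ≤ M * ‖y (ns (φ n)) i - m n‖ :=
    mul_le_mul_of_nonneg_right (hmmM n) (norm_nonneg _)
  have hF : mm n * δ n ≤ M * δ n := by
    rcases hδ0 with h | h
    · exact mul_le_mul_of_nonneg_right (hmmM n) h
    · by_cases hD' : D.Nonempty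
      · obtain ⟨q, hq⟩ := hD'
        have : 0 ≤ R := (norm_nonneg _).trans (hR q hq)
        exact mul_le_mul_of_nonneg_right (hmmM n) (by positivity)
      · rw [Set.not_nonempty_iff_eq_empty] at hD'
        have hM : M = 0 := by
          have : ν = 0 := by
            rw [← ae_eq_bot, ← eventually_false_iff_eq_bot]
            simpa [hD'] using hD
          simp [M, this]
        rw [h, hM]
  rw [hB] at hA
  rw [mul_add] at hC'
  linarith

lemma lloyd_injective {ν : Measure E2} [IsFiniteMeasure ν] (hac : ν ≪ volume)
    {D : Set E2} (hDc : IsCompact D) (hD : ∀ᵐ q ∂ν, q ∈ D)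
    (hball : ∀ w ∈ D, ∀ U ∈ 𝓝 w, 0 < ν.real U) {z : Fin N → E2} (hzD : ∀ i, z i ∈ D)
    {y c : ℕ → Fin N → E2} (hy : Tendsto y atTop (𝓝 z))
    (hyi : ∀ n, Function.Injective (y n))
    (hc : ∀ n i, c n i = (ν.real (lloydCell D (y n) i))⁻¹ • ∫ q in lloydCell D (y n) i, q ∂ν)
    (hlim : ∀ i, Tendsto (fun n => ν.real (lloydCell D (y n) i) * ‖y n i - c n i‖ ^ 2)
      atTop (𝓝 0)) : Function.Injective z := by
  classical
  intro i0 j0 hz0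
  by_contra hij
  set w := z i0 with hw
  have hS : ∀ i, z i = w → Tendsto (fun n => ν.real (lloydCell D (y n) i)) atTop (𝓝 0) := by
    intro i hi
    by_cases h : i = i0
    · subst h
      exact lloyd_collide hac hDc hD hy hyi hc hlim hij hz0
    · exact lloyd_collide hac hDc hD hy hyi hc hlim h hi
  have hsum : Tendsto (fun n => ∑ i with z i = w, ν.real (lloydCell D (y n) i)) atTop (𝓝 0) := by
    have := tendsto_finsetSum (Finset.univ.filter (fun i => z i = w))
      (fun i hi => hS i (Finset.mem_filter.1 hi).2)
    simpa using this
  have hev : ∀ᶠ p : E2 × (Fin N → E2) in 𝓝 w ×ˢ 𝓝 z,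
      ∀ j, z j ≠ w → ‖p.1 - p.2 i0‖ < ‖p.1 - p.2 j‖ := by
    rw [← nhds_prod_eq, eventually_all]
    intro j
    by_cases hj : z j = w
    · simp [hj]
    · have h1 : ContinuousAt (fun p : E2 × (Fin N → E2) => ‖p.1 - p.2 i0‖) (w, z) := by fun_prop
      have h2 : ContinuousAt (fun p : E2 × (Fin N → E2) => ‖p.1 - p.2 j‖) (w, z) := by fun_prop
      have h3 : ‖w - z i0‖ < ‖w - z j‖ := by
        rw [← hw, sub_self, norm_zero, norm_pos_iff, sub_ne_zero]
        exact Ne.symm hj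
      exact (h1.eventually_lt h2 h3).mono fun p hp _ => hp
  obtain ⟨P, hP, Q, hQ, hPQ⟩ := eventually_prod_iff.1 hev
  have hU := hball w (hzD i0) {q | P q} hP
  obtain ⟨n, hn1, hn2⟩ := ((hsum.eventually (gt_mem_nhds hU)).and (hy.eventually hQ)).exists
  have : ν.real {q | P q} ≤ ν.real (⋃ i ∈ Finset.univ.filter (fun i => z i = w),
      lloydCell D (y n) i) := by
    refine ENNReal.toReal_mono (measure_ne_top _ _) (measure_mono_ae ?_)
    filter_upwards [hD] with q hqD hq
    obtain ⟨i, hi⟩ := lloydCell_cover (y n) hqD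
    have hiw : z i = w := by
      by_contra hne
      exact absurd (hi.2 i0) (not_le.2 (hPQ hq hn2 i hne))
    exact Set.mem_biUnion (by simpa using hiw) hi
  have h2 := this.trans (measureReal_biUnion_finset_le _ _)
  linarith

lemma lloyd_main {ν : Measure E2} [IsFiniteMeasure ν] (hac : ν ≪ volume)
    {D : Set E2} (hDc : IsCompact D) (hD : ∀ᵐ q ∂ν, q ∈ D)
    (hball : ∀ w ∈ D, ∀ U ∈ 𝓝 w, 0 < ν.real U)
    (x : ℕ → Fin N → E2)
    (hxD : ∀ k i, x k i ∈ D)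
    (hxinj : ∀ k, Function.Injective (x k))
    (hiter : ∀ k i, x (k + 1) i
      = (ν.real (lloydCell D (x k) i))⁻¹ • ∫ q in lloydCell D (x k) i, q ∂ν) :
    Tendsto (fun k => Metric.infDist (x k) {z | Function.Injective z ∧ (∀ i, z i ∈ D) ∧
      ∀ i, z i = (ν.real (lloydCell D z i))⁻¹ • ∫ q in lloydCell D z i, q ∂ν}) atTop (𝓝 0) := by
  have hdesc := fun k => lloyd_descent hac hDc hD (hxinj k) (hiter k)
  have hterm : ∀ k i, 0 ≤ ν.real (lloydCell D (x k) i) * ‖x k i - x (k + 1) i‖ ^ 2 :=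
    fun k i => mul_nonneg measureReal_nonneg (by positivity)
  have hanti : Antitone (fun k => ∫ q, lloydF (x k) q ∂ν) := by
    refine antitone_nat_of_succ_le fun k => ?_
    have := hdesc k
    have h2 := Finset.sum_nonneg (fun i (_ : i ∈ Finset.univ) => hterm k i)
    linarith
  have hbdd : BddBelow (Set.range (fun k => ∫ q, lloydF (x k) q ∂ν)) :=
    ⟨0, by rintro _ ⟨k, rfl⟩; exact integral_nonneg fun q => lloydF_nonneg _ _⟩
  have hconv := tendsto_atTop_ciInf hanti hbdd
  have hdiff := hconv.sub (hconv.comp (tendsto_add_atTop_nat 1))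
  rw [sub_self] at hdiff
  have hlim : ∀ i, Tendsto (fun k => ν.real (lloydCell D (x k) i) * ‖x k i - x (k + 1) i‖ ^ 2)
      atTop (𝓝 0) := fun i =>
    squeeze_zero (fun k => hterm k i) (fun k => (Finset.single_le_sum
      (fun i (_ : i ∈ Finset.univ) => hterm k i) (Finset.mem_univ i)).trans (hdesc k)) hdiff
  refine tendsto_of_subseq_tendsto fun ns hns => ?_
  obtain ⟨z, hz, φ, hφ, hlz⟩ := (isCompact_univ_pi (fun _ : Fin N => hDc)).tendsto_subseq
    (x := fun n => x (ns n)) (fun n i _ => hxD _ i)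
  have hzD : ∀ i, z i ∈ D := fun i => hz i (Set.mem_univ i)
  refine ⟨φ, ?_⟩
  have hsub : Tendsto (fun n => ns (φ n)) atTop atTop := hns.comp hφ.tendsto_atTop
  have hy : Tendsto (fun n => x (ns (φ n))) atTop (𝓝 z) := hlz
  have hzi : Function.Injective z :=
    lloyd_injective hac hDc hD hball hzD hy (fun n => hxinj _)
      (c := fun n => x (ns (φ n) + 1)) (fun n i => hiter _ i) (fun i => (hlim i).comp hsub)
  have hpos : ∀ i, 0 < ν.real (lloydCell D z i) := by
    intro i
    have hev : ∀ᶠ q in 𝓝 (z i), ∀ j, ‖q - z i‖ ≤ ‖q - z j‖ := by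
      rw [eventually_all]
      intro j
      by_cases hj : j = i
      · simp [hj]
      · have h1 : ContinuousAt (fun q : E2 => ‖q - z i‖) (z i) := by fun_prop
        have h2 : ContinuousAt (fun q : E2 => ‖q - z j‖) (z i) := by fun_prop
        have h3 : ‖z i - z i‖ < ‖z i - z j‖ := by
          rw [sub_self, norm_zero, norm_pos_iff, sub_ne_zero]
          exact hzi.ne (Ne.symm hj)
        exact (h1.eventually_lt h2 h3).mono fun q hq => hq.le
    refine (hball (z i) (hzD i) _ hev).trans_le ?_
    refine ENNReal.toReal_mono (measure_ne_top _ _) (measure_mono_ae ?_)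
    filter_upwards [hD] with q hqD hq using ⟨hqD, hq⟩
  have hzC : z ∈ {z | Function.Injective z ∧ (∀ i, z i ∈ D) ∧
      ∀ i, z i = (ν.real (lloydCell D z i))⁻¹ • ∫ q in lloydCell D z i, q ∂ν} := by
    refine ⟨hzi, hzD, fun i => ?_⟩
    have h1 : Tendsto (fun n => ν.real (lloydCell D (x (ns (φ n))) i)) atTop
        (𝓝 (ν.real (lloydCell D z i))) := by
      have := lloyd_cont hac hDc hD hzi hy (f := fun _ => (1 : ℝ)) continuous_const i
      simpa using this
    have h2 := lloyd_cont hac hDc hD hzi hy (f := fun q => q) continuous_id i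
    have h3 := (h1.inv₀ (hpos i).ne').smul h2
    have h4 := h1.mul ((((tendsto_pi_nhds.1 hy) i).sub h3).norm.pow 2)
    have h5 := (hlim i).comp hsub
    have h6 := tendsto_nhds_unique h4 (h5.congr fun n => by
      simp only [Function.comp_def, hiter])
    rcases mul_eq_zero.1 h6 with h | h
    · exact absurd h (hpos i).ne'
    · exact sub_eq_zero.1 (norm_eq_zero.1 (pow_eq_zero_iff two_ne_zero |>.1 h))
  exact squeeze_zero (fun n => Metric.infDist_nonneg)
    (fun n => Metric.infDist_le_dist_of_mem hzC) (tendsto_iff_dist_tendsto_zero.1 hy)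

end

theorem stmt_11 (D : Set E2) (hDc : IsCompact D) (hDconv : Convex ℝ D)
    (hDint : (interior D).Nonempty)
    (μ : E2 → ℝ) (hμcont : ContinuousOn μ D) (hμpos : ∀ q ∈ D, 0 < μ q)
    (N : ℕ) (hN : 0 < N)
    (V : (Fin N → E2) → Fin N → Set E2)
    (hV : ∀ z i, V z i = {q ∈ D | ∀ j, ‖q - z i‖ ≤ ‖q - z j‖})
    (c : (Fin N → E2) → Fin N → E2)
    (hc : ∀ z i, c z i = (∫ q in V z i, μ q)⁻¹ • ∫ q in V z i, μ q • q)
    (C : Set (Fin N → E2))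
    (hC : C = {z | Function.Injective z ∧ (∀ i, z i ∈ D) ∧ ∀ i, z i = c z i})
    (x : ℕ → Fin N → E2)
    (hxD : ∀ k i, x k i ∈ D)
    (hxinj : ∀ k, Function.Injective (x k))
    (hiter : ∀ k, x (k + 1) = c (x k)) :
    Tendsto (fun k => Metric.infDist (x k) C) atTop (nhds 0) := by
  have : NeZero N := ⟨hN.ne'⟩
  have hDm : MeasurableSet D := hDc.isClosed.measurableSet
  have hVc : ∀ z i, V z i = lloydCell D z i := hV
  have hμi : IntegrableOn μ D := hμcont.integrableOn_compact hDc
  have hμm : AEMeasurable μ (volume.restrict D) := hμi.aestronglyMeasurable.aemeasurable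
  let ν : Measure E2 := (volume.restrict D).withDensity (fun q => ENNReal.ofReal (μ q))
  have hνD : ν ≪ volume.restrict D := withDensity_absolutelyContinuous _ _
  have hac : ν ≪ volume := hνD.trans Measure.absolutelyContinuous_restrict
  have hfin : IsFiniteMeasure ν := isFiniteMeasure_withDensity_ofReal hμi.2
  have hD : ∀ᵐ q ∂ν, q ∈ D := hνD.ae_le (ae_restrict_mem hDm)
  have hDν : volume.restrict D ≪ ν := by
    refine withDensity_absolutelyContinuous' hμm.ennreal_ofReal ?_
    filter_upwards [ae_restrict_mem hDm] with q hq
    simpa using hμpos q hq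
  have hball : ∀ w ∈ D, ∀ U ∈ 𝓝 w, 0 < ν.real U := by
    intro w hw U hU
    rw [measureReal_def, ENNReal.toReal_pos_iff]
    refine ⟨pos_iff_ne_zero.2 fun h0 => ?_, measure_lt_top _ _⟩
    have h1 := hDν h0
    have hwc : w ∈ closure (interior D) := by
      rw [hDconv.closure_interior_eq_closure_of_nonempty_interior hDint]
      exact subset_closure hw
    obtain ⟨p, hp1, hp2⟩ := mem_closure_iff_nhds.1 hwc _ (interior_mem_nhds.2 hU)
    have h2 : 0 < volume (interior U ∩ interior D) :=
      (isOpen_interior.inter isOpen_interior).measure_pos _ ⟨p, hp1, hp2⟩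
    rw [Measure.restrict_apply' hDm] at h1
    exact h2.ne' (measure_mono_null (Set.inter_subset_inter interior_subset interior_subset) h1)
  have hint : ∀ (F : Type) [NormedAddCommGroup F] [NormedSpace ℝ F] (f : E2 → F) z i,
      ∫ q in lloydCell D z i, f q ∂ν = ∫ q in V z i, μ q • f q := by
    intro F _ _ f z i
    have hsub : lloydCell D z i ⊆ D := fun q hq => hq.1
    have hm := (lloydCell_closed hDc z i).measurableSet
    have h1 : ν.restrict (lloydCell D z i) = (volume.restrict (lloydCell D z i)).withDensity
        (fun q => ENNReal.ofReal (μ q)) := by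
      rw [restrict_withDensity hm, Measure.restrict_restrict hm, Set.inter_eq_left.2 hsub]
    rw [h1, integral_withDensity_eq_integral_toReal_smul₀
      (hμm.mono_measure (Measure.restrict_mono hsub le_rfl)).ennreal_ofReal
      (ae_of_all _ fun q => ENNReal.ofReal_lt_top), hVc]
    refine setIntegral_congr_fun hm fun q hq => ?_
    simp only [ENNReal.toReal_ofReal (hμpos q hq.1).le]
  have hcc : ∀ z i, c z i = (ν.real (lloydCell D z i))⁻¹ • ∫ q in lloydCell D z i, q ∂ν := by
    intro z i
    rw [hc, hint E2 (fun q => q)]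
    have := hint ℝ (fun _ => 1) z i
    simp only [smul_eq_mul, mul_one, integral_const, measureReal_restrict_apply_univ] at this
    rw [this]
  subst hC
  simp_rw [hcc]
  exact lloyd_main hac hDc hD hball x hxD hxinj (fun k i => by rw [hiter, hcc])
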